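/- For every causal model M and all Y, X, Z ⊆ V, y ∈ R(Y), x ∈ R(X), z ∈ R(Z) with P_M(z) > 0: the conditional B-probability of the basic counterfactual equals the conditional probability computed in the PO-SCM: P^B(y_x | z) = P^N(y_x | z). -/

import Mathlib

/-!
It suffices to compare the two semantics world by world: for each assignment `a` of the original
variables, summing `P^N(y_x | a, φ) P^N(a, φ)` over the values `φ` of the potential outcomes gives
`P^B(y_x | a) P(a)` (`CM.sum_MN_cfBasic`), and `∑_φ P^N(a, φ) = P(a)` (`CM.sum_MN_joint`).

For fixed `φ` the PO-SCM is a deterministic model over the original variables (`CM.detModel`), and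
truncated factorizations are normalized (`CM.sum_clamped`), so each basic counterfactual given
exogenous values of positive probability is a plain sum, over worlds `w` agreeing with the
intervention and the exogenous values, of products of tables (`CM.cfBasic_eq_core`). After
exchanging the sums over `φ` and `w`, what remains is the probability that `φ` produces both `a`
without intervention and `w` under the intervention. As the potential outcomes are independent this
factors over the endogenous variables `j` (`CM.sum_poProb`). If the parents of `j` take different
values in `a` and `w`, two independent outcomes are involved and the factor is
`P(a_j | pa_a) P(w_j | pa_w)`; if they take the same values, a single outcome must equal both `a_j`
and `w_j`, giving `P(a_j | pa_a)` times the point mass at `a_j`. In both cases this is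
`P(a_j | pa_a)` times the table of the refinement of `M` at `a` (`CM.prod_paAsg`).
-/

open Finset

noncomputable section

attribute [local instance] Classical.propDecidable

/-- An assignment of values to the variables. -/
abbrev Asg {ν : Type} (Val : ν → Type) : Type := (i : ν) → Val i

/-- A probabilistic causal model (a causal Bayesian network with explicit exogenous
variables): a signature (variables `ν` with value sets `Val`), a graph given by the
parent map `pa` (with `ord` a witness of acyclicity, and the variables in `exo` being
the roots), and a joint probability distribution that is Markov relative to the graph,
presented by the conditional probability table `cpt i w x = P(i = x | pa i = w|_{pa i})`
of each variable given its parents (for exogenous variables this is the marginal). -/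
structure CM (ν : Type) (Val : ν → Type) : Type where
  exo : Finset ν
  pa : ν → Finset ν
  ord : ν → ℕ
  cpt : (i : ν) → Asg Val → Val i → ℝ

/-- A basic counterfactual event `(Y = yv)_{X ← xv}`. -/
structure CFEvent (ν : Type) (Val : ν → Type) : Type where
  X : Finset ν
  xv : Asg Val
  Y : Finset ν
  yv : Asg Val

namespace CM

variable {ν : Type} {Val : ν → Type}

/-- Well-formedness of a causal model: exogenous variables are roots, the graph is
acyclic, the conditional probability table of each variable depends only on its
parents, and each table is a probability distribution. -/
structure WF [Fintype ν] [∀ i, Fintype (Val i)] (M : CM ν Val) : Prop where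
  pa_exo : ∀ i ∈ M.exo, M.pa i = ∅
  acyclic : ∀ i j, j ∈ M.pa i → M.ord j < M.ord i
  cpt_pa : ∀ (i : ν) (w w' : Asg Val) (x : Val i),
    (∀ j ∈ M.pa i, w j = w' j) → M.cpt i w x = M.cpt i w' x
  cpt_nonneg : ∀ i w x, 0 ≤ M.cpt i w x
  cpt_sum : ∀ i w, ∑ x, M.cpt i w x = 1

variable [Fintype ν] [∀ i, Fintype (Val i)] [∀ i, Nonempty (Val i)]

variable (M : CM ν Val)

/-- The joint distribution `P(U = u, V = v)` (Markov factorization). -/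
def joint (w : Asg Val) : ℝ := ∏ i, M.cpt i w (w i)

/-- The interventional distribution `P_{do(X = xv)}` (truncated factorization). -/
def pdo (X : Finset ν) (xv w : Asg Val) : ℝ :=
  if ∀ i ∈ X, w i = xv i then ∏ i ∈ Xᶜ, M.cpt i w (w i) else 0

/-- `P_{do(X = xv)}(Y = yv | U = u)`, where `u` is the exogenous part of `w`:
the probability of the basic counterfactual `(Y = yv)_{X ← xv}` given the world `w`. -/
def cfBasic (X : Finset ν) (xv : Asg Val) (Y : Finset ν) (yv : Asg Val) (w : Asg Val) : ℝ :=
  (∑ w' : Asg Val,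
      if (∀ i ∈ M.exo, w' i = w i) ∧ ∀ i ∈ Y, w' i = yv i then M.pdo X xv w' else 0) /
  (∑ w' : Asg Val, if ∀ i ∈ M.exo, w' i = w i then M.pdo X xv w' else 0)

/-- The probability of a complex counterfactual
`P(y_x, …, z_w) = Σ_{(u,v)} P(y_x | u,v) ⋯ P(z_w | u,v) P(u,v)`. -/
def cfProb (evs : List (CFEvent ν Val)) : ℝ :=
  ∑ w : Asg Val, (evs.map fun e => M.cfBasic e.X e.xv e.Y e.yv w).prod * M.joint w

/-- Conditional probability of a complex counterfactual given an actual event `Z = zv`: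
`P(y_x, …, z_w | Z = zv) = P(y_x, …, z_w, Z = zv) / P(Z = zv)`. -/
def cfProbCond (evs : List (CFEvent ν Val)) (Z : Finset ν) (zv : Asg Val) : ℝ :=
  (∑ w : Asg Val,
      (if ∀ i ∈ Z, w i = zv i then (evs.map fun e => M.cfBasic e.X e.xv e.Y e.yv w).prod
       else 0) * M.joint w) /
  (∑ w : Asg Val, if ∀ i ∈ Z, w i = zv i then M.joint w else 0)

/-- `M` is a structural causal model: every endogenous variable is a deterministic
function of its parents (the exogenous variables are automatically mutually
independent in this presentation). -/
def IsSCM : Prop :=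
  ∀ i ∉ M.exo, ∀ (w : Asg Val) (x : Val i), M.cpt i w x = 0 ∨ M.cpt i w x = 1

/-- The actualized refinement `M^{(u,v)}` of `M` at the actual world `a`:
for each endogenous variable, the conditional distribution given the *actual* values of
its parents is replaced by the point mass at the actual value of the variable. -/
def refine (a : Asg Val) : CM ν Val where
  exo := M.exo
  pa := M.pa
  ord := M.ord
  cpt := fun i w x =>
    if i ∉ M.exo ∧ ∀ j ∈ M.pa i, w j = a j then (if x = a i then 1 else 0)
    else M.cpt i w x

/-- The B-semantics probability of a basic counterfactual,
`P^B((Y = yv)_{X ← xv} | a) = (P^{a})_{do(X = xv)}(Y = yv | U = u)` where `u` is the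
exogenous part of the actual world `a`. -/
def pbBasic (a : Asg Val) (X : Finset ν) (xv : Asg Val) (Y : Finset ν) (yv : Asg Val) : ℝ :=
  (M.refine a).cfBasic X xv Y yv a

/-- The B-semantics probability of a complex counterfactual. -/
def pbProb (evs : List (CFEvent ν Val)) : ℝ :=
  ∑ w : Asg Val, (evs.map fun e => M.pbBasic w e.X e.xv e.Y e.yv).prod * M.joint w

/-- The conditional B-semantics probability of a complex counterfactual given `Z = zv`. -/
def pbProbCond (evs : List (CFEvent ν Val)) (Z : Finset ν) (zv : Asg Val) : ℝ :=
  (∑ w : Asg Val,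
      (if ∀ i ∈ Z, w i = zv i then (evs.map fun e => M.pbBasic w e.X e.xv e.Y e.yv).prod
       else 0) * M.joint w) /
  (∑ w : Asg Val, if ∀ i ∈ Z, w i = zv i then M.joint w else 0)

/-- An assignment of values to the parents of `i`. -/
def PaAsg (i : ν) : Type := (j : {j : ν // j ∈ M.pa i}) → Val j.1

instance (i : ν) : Fintype (M.PaAsg i) := by unfold PaAsg; infer_instance
instance (i : ν) : Nonempty (M.PaAsg i) := ⟨fun j => Classical.arbitrary (Val j.1)⟩

/-- Extend an assignment of the parents of `i` to a full assignment (arbitrarily). -/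
def extendPa (i : ν) (κ : M.PaAsg i) : Asg Val :=
  fun j => if h : j ∈ M.pa i then κ ⟨j, h⟩ else Classical.arbitrary (Val j)

/-- The index type of the potential outcome variables `X_{pa_X}` of the PO-SCM:
one for each endogenous variable `X` and each value `pa_X` of its parents. -/
def POI : Type := Σ i : {i : ν // i ∉ M.exo}, M.PaAsg i.1

instance : Fintype (POI M) := by unfold POI; infer_instance

/-- The value set of the potential outcome variable `X_{pa_X}` is that of `X`. -/
def POB : POI M → Type := fun p => Val p.1.1

instance (p : POI M) : Fintype (POB M p) := by unfold POB; infer_instance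
instance (p : POI M) : Nonempty (POB M p) := by unfold POB; infer_instance

/-- The type of values of the response variable `U_X` of the canonical frame:
functions from values of the parents of `X` to values of `X`. -/
def RType (i : ν) : Type := M.PaAsg i → Val i

instance (i : ν) : Fintype (M.RType i) := by unfold RType; infer_instance
instance (i : ν) : Nonempty (M.RType i) := ⟨fun _ => Classical.arbitrary (Val i)⟩

/-- The index type of the response variables of the canonical frame:
one for each endogenous variable. -/
def RVI : Type := {i : ν // i ∉ M.exo}

instance : Fintype (RVI M) := by unfold RVI; infer_instance

/-- The value set of the response variable `U_X`. -/
def RB : RVI M → Type := fun p => M.RType p.1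

instance (p : RVI M) : Fintype (RB M p) := by unfold RB; infer_instance
instance (p : RVI M) : Nonempty (RB M p) := by unfold RB; infer_instance

end CM

/-- The family of value sets of an extended signature `ν ⊕ β`. -/
def SumVal {ν β : Type} (Val : ν → Type) (B : β → Type) : ν ⊕ β → Type := fun i =>
  match i with
  | .inl j => Val j
  | .inr b => B b

section SumValInst

variable {ν β : Type} {Val : ν → Type} {B : β → Type}

instance [∀ i, Fintype (Val i)] [∀ b, Fintype (B b)] (i : ν ⊕ β) :
    Fintype (SumVal Val B i) := by
  cases i with
  | inl j => exact inferInstanceAs (Fintype (Val j))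
  | inr b => exact inferInstanceAs (Fintype (B b))

instance [∀ i, Nonempty (Val i)] [∀ b, Nonempty (B b)] (i : ν ⊕ β) :
    Nonempty (SumVal Val B i) := by
  cases i with
  | inl j => exact inferInstanceAs (Nonempty (Val j))
  | inr b => exact inferInstanceAs (Nonempty (B b))

/-- Lift an assignment on `ν` to one on `ν ⊕ β` (arbitrary on the new variables). -/
def liftAsg [∀ b, Nonempty (B b)] (xv : Asg Val) : Asg (SumVal Val B) := fun i =>
  match i with
  | .inl j => xv j
  | .inr b => Classical.arbitrary (B b)

/-- Lift a counterfactual event on the original variables to the extended signature. -/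
def liftCFEvent [∀ b, Nonempty (B b)] (e : CFEvent ν Val) : CFEvent (ν ⊕ β) (SumVal Val B) :=
  ⟨e.X.image Sum.inl, liftAsg e.xv, e.Y.image Sum.inl, liftAsg e.yv⟩

variable [Fintype ν] [Fintype β] [∀ i, Fintype (Val i)] [∀ b, Fintype (B b)]
  [∀ i, Nonempty (Val i)] [∀ b, Nonempty (B b)]

/-- The probability, computed in a model `N` over an extended signature, of a complex
counterfactual over the original variables. -/
def extProb (N : CM (ν ⊕ β) (SumVal Val B)) (evs : List (CFEvent ν Val)) : ℝ :=
  N.cfProb (evs.map liftCFEvent)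

/-- The probability, computed in a model `N` over an extended signature, of a complex
counterfactual over the original variables, conditional on an actual event `Z = zv`
over the original variables. -/
def extProbCond (N : CM (ν ⊕ β) (SumVal Val B)) (evs : List (CFEvent ν Val))
    (Z : Finset ν) (zv : Asg Val) : ℝ :=
  N.cfProbCond (evs.map liftCFEvent) (Z.image Sum.inl) (liftAsg zv)

/-- The probability, computed in a model `N` over an extended signature, of a basic
counterfactual conditional on the values `a` of *all* the original variables
(marginalizing over the added exogenous variables), via the law of total probability. -/
def extBasicCond (N : CM (ν ⊕ β) (SumVal Val B)) (a : Asg Val)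
    (X : Finset ν) (xv : Asg Val) (Y : Finset ν) (yv : Asg Val) : ℝ :=
  (∑ w : Asg (SumVal Val B),
      if ∀ i : ν, w (Sum.inl i) = a i then
        N.cfBasic (X.image Sum.inl) (liftAsg xv) (Y.image Sum.inl) (liftAsg yv) w * N.joint w
      else 0) /
  (∑ w : Asg (SumVal Val B), if ∀ i : ν, w (Sum.inl i) = a i then N.joint w else 0)

end SumValInst

namespace CM

variable {ν : Type} {Val : ν → Type} [Fintype ν] [∀ i, Fintype (Val i)] [∀ i, Nonempty (Val i)]
variable (M : CM ν Val)

/-- The PO-SCM `M^N` of `M`: the structural causal model obtained from `M` by adding,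
for each endogenous variable `X` and each value `pa_X` of its parents, an exogenous
potential outcome variable `X_{pa_X}` (with marginal `P_M(X | Pa_X = pa_X)`, all
exogenous variables mutually independent), and the structural equation
`X = X_{pa_X}` whenever `Pa_X = pa_X`. -/
def MN : CM (ν ⊕ POI M) (SumVal Val (POB M)) where
  exo := (M.exo.image Sum.inl) ∪ (univ.image Sum.inr)
  pa := fun i =>
    match i with
    | .inl j => ((M.pa j).image Sum.inl) ∪
        ((univ.filter fun p : POI M => p.1.1 = j).image Sum.inr)
    | .inr _ => ∅
  ord := fun i =>
    match i with
    | .inl j => M.ord j + 1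
    | .inr _ => 0
  cpt := fun i =>
    match i with
    | .inl j => fun w x =>
        if h : j ∈ M.exo then M.cpt j (fun k => w (Sum.inl k)) x
        else if x = w (Sum.inr ⟨⟨j, h⟩, fun k => w (Sum.inl k.1)⟩) then 1 else 0
    | .inr p => fun _ x => M.cpt p.1.1 (M.extendPa p.1.1 p.2) x

/-- `P^N(y_x, …, z_w)`: the probability of a complex counterfactual computed in the
PO-SCM `M^N`. -/
def pnProb (evs : List (CFEvent ν Val)) : ℝ := extProb M.MN evs

/-- `P^N(y_x, …, z_w | Z = zv)`: the conditional probability of a complex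
counterfactual computed in the PO-SCM `M^N`, given an actual event on the
endogenous variables. -/
def pnProbCond (evs : List (CFEvent ν Val)) (Z : Finset ν) (zv : Asg Val) : ℝ :=
  extProbCond M.MN evs Z zv

/-- `P^N((Y = yv)_{X ← xv} | U = u, V = v)`: the probability of a basic counterfactual
computed in the PO-SCM `M^N`, conditional on the exogenous and endogenous variables of
`M` only (marginalizing over the potential outcome variables). -/
def pnBasicCond (a : Asg Val) (X : Finset ν) (xv : Asg Val) (Y : Finset ν) (yv : Asg Val) : ℝ :=
  extBasicCond M.MN a X xv Y yv

/-- A canonical SCM for `M`, determined by a distribution `q` of the response variables: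
the SCM over the canonical frame, which adds for each endogenous variable `X` an
exogenous response variable `U_X` ranging over the functions `f_X : R(Pa_X) → R(X)`,
with the structural equation `X = f_X(Pa_X)` where `f_X` is the value of `U_X`. -/
def canonSCM (q : (p : RVI M) → RType M p.1 → ℝ) : CM (ν ⊕ RVI M) (SumVal Val (RB M)) where
  exo := (M.exo.image Sum.inl) ∪ (univ.image Sum.inr)
  pa := fun i =>
    match i with
    | .inl j => ((M.pa j).image Sum.inl) ∪
        ((univ.filter fun p : RVI M => p.1 = j).image Sum.inr)
    | .inr _ => ∅
  ord := fun i =>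
    match i with
    | .inl j => M.ord j + 1
    | .inr _ => 0
  cpt := fun i =>
    match i with
    | .inl j => fun w x =>
        if h : j ∈ M.exo then M.cpt j (fun k => w (Sum.inl k)) x
        else if x = w (Sum.inr ⟨j, h⟩) (fun k => w (Sum.inl k.1)) then 1 else 0
    | .inr p => fun _ x => q p x

/-- `q` is the distribution of the response variables of a canonical SCM for `M`:
it is a probability distribution (the response variables being mutually independent and
independent of the exogenous variables of `M`, whose distribution is kept), and it
reproduces the conditional probability tables of `M`:
`P_M(X = x | Pa_X = pa_X) = Σ_{f_X with f_X(pa_X) = x} P(U_X = f_X)`. -/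
def IsCanonicalDist (q : (p : RVI M) → RType M p.1 → ℝ) : Prop :=
  (∀ p x, 0 ≤ q p x) ∧ (∀ p, ∑ f, q p f = 1) ∧
  ∀ (p : RVI M) (κ : M.PaAsg p.1) (x : Val p.1),
    M.cpt p.1 (M.extendPa p.1 κ) x = ∑ f ∈ univ.filter (fun f : RType M p.1 => f κ = x), q p f

/-- The distribution of the response variables of the GH-SCM:
`P(U_X = f_X) = ∏_{pa_X} P_M(X = f_X(pa_X) | Pa_X = pa_X)`. -/
def qGH : (p : RVI M) → RType M p.1 → ℝ := fun p f =>
  ∏ κ : M.PaAsg p.1, M.cpt p.1 (M.extendPa p.1 κ) (f κ)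

end CM

/-- A default assignment. -/
def dfltAsg {ν : Type} (Val : ν → Type) [∀ i, Nonempty (Val i)] : Asg Val :=
  fun i => Classical.arbitrary (Val i)

/-! ### Truncated factorizations are normalized -/

namespace CM

/-- Classical decidability of equality on a sum type. As a local instance it takes precedence over
the componentwise one, and so matches the instances that appear when definitions over an
arbitrary signature are specialized to an extended signature. -/
abbrev classicalSumDecEq {α β : Type} : DecidableEq (α ⊕ β) :=
  fun p q => Classical.propDecidable (p = q)

section Helpers

attribute [local instance] classicalSumDecEq

set_option linter.unusedSectionVars false

variable {ν : Type} {Val : ν → Type} [Fintype ν] [∀ i, Fintype (Val i)]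

/-- Normalization: once the variables of `S` are clamped to `a`, the product of the remaining
conditional probability tables sums to one. The induction clamps, one at a time, an unclamped
variable of minimal order: its parents are all clamped, so its table is constant over the sum. -/
theorem sum_clamped (K : CM ν Val) (hK : K.WF) (n : ℕ) :
    ∀ (S : Finset ν) (a : Asg Val), Sᶜ.card = n →
      (∑ w : Asg Val, if ∀ i ∈ S, w i = a i then ∏ i ∈ Sᶜ, K.cpt i w (w i) else 0) = 1 := by
  induction n with
  | zero =>
    intro S a hS
    have hS' : Sᶜ = ∅ := Finset.card_eq_zero.mp hS
    have hU : S = univ := by simpa using hS'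
    subst hU
    have : ∀ w : Asg Val, (∀ i ∈ (univ : Finset ν), w i = a i) ↔ w = a := by
      intro w
      simp [funext_iff]
    simp only [this]
    simp
  | succ n ih =>
    intro S a hS
    have hne : Sᶜ.Nonempty := by
      rw [← Finset.card_pos]; omega
    obtain ⟨i, hi, hmin⟩ := Finset.exists_min_image Sᶜ K.ord hne
    have hiS : i ∉ S := by simpa using hi
    have hpa : ∀ j ∈ K.pa i, j ∈ S := by
      intro j hj
      by_contra hjS
      have h1 := hmin j (by simpa using hjS)
      have h2 := hK.acyclic i j hj
      omega
    have hcompl : Sᶜ = insert i (insert i S)ᶜ := by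
      ext j
      by_cases h : j = i
      · subst h; simp [hiS]
      · simp [h]
    have hcard : (insert i S)ᶜ.card = n := by
      rw [hcompl, Finset.card_insert_of_notMem (by simp)] at hS
      omega
    have hsplit : ∀ w : Asg Val,
        (if ∀ j ∈ S, w j = a j then ∏ j ∈ Sᶜ, K.cpt j w (w j) else 0) =
        ∑ x : Val i, K.cpt i a x *
          (if ∀ j ∈ insert i S, w j = Function.update a i x j then
            ∏ j ∈ (insert i S)ᶜ, K.cpt j w (w j) else 0) := by
      intro w
      have hiff : ∀ x : Val i, (∀ j ∈ insert i S, w j = Function.update a i x j) ↔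
          (w i = x ∧ ∀ j ∈ S, w j = a j) := by
        intro x
        rw [Finset.forall_mem_insert]
        refine and_congr (by simp) (forall₂_congr fun j hj => ?_)
        rw [Function.update_of_ne (ne_of_mem_of_not_mem hj hiS)]
      simp only [hiff]
      by_cases hw : ∀ j ∈ S, w j = a j
      · rw [if_pos hw, Finset.sum_eq_single (w i)]
        · rw [if_pos ⟨rfl, hw⟩, hcompl, Finset.prod_insert (by simp)]
          rw [hK.cpt_pa i w a (w i) (fun j hj => hw j (hpa j hj))]
        · intro x _ hx
          rw [if_neg (fun h => hx h.1.symm), mul_zero]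
        · simp
      · rw [if_neg hw, Finset.sum_eq_zero]
        intro x _
        rw [if_neg (fun h => hw h.2), mul_zero]
    simp only [hsplit]
    rw [Finset.sum_comm]
    simp only [← Finset.mul_sum, ih _ _ hcard, mul_one]
    exact hK.cpt_sum i a

/-- The probability `P(U = u)` of the exogenous part of `a`. -/
def exoProb (K : CM ν Val) (a : Asg Val) : ℝ := ∏ i ∈ K.exo, K.cpt i a (a i)

/-- The product of the tables of the endogenous variables outside `X`. -/
def endoProd (K : CM ν Val) (X : Finset ν) (w : Asg Val) : ℝ :=
  ∏ j : {i : ν // i ∉ K.exo}, if j.1 ∈ X then 1 else K.cpt j.1 w (w j.1)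

/-- The probability, given the exogenous part of `a`, that `Y = yv` after intervening to
set `X = xv`, written without any division. -/
def core (K : CM ν Val) (X : Finset ν) (xv : Asg Val) (Y : Finset ν) (yv : Asg Val)
    (a : Asg Val) : ℝ :=
  ∑ w : Asg Val, if (∀ i ∈ K.exo, w i = a i) ∧ (∀ i ∈ Y, w i = yv i) ∧ ∀ i ∈ X, w i = xv i then
    K.endoProd X w else 0

theorem prod_compl_eq (K : CM ν Val) (X : Finset ν) (hX : ∀ i ∈ X, i ∉ K.exo) (w : Asg Val) :
    ∏ i ∈ Xᶜ, K.cpt i w (w i) = K.exoProb w * K.endoProd X w := by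
  have h1 : ∏ i ∈ Xᶜ, K.cpt i w (w i) = ∏ i, if i ∈ X then 1 else K.cpt i w (w i) := by
    rw [Finset.prod_ite]
    simp only [Finset.prod_const_one, one_mul]
    congr 1
    ext i; simp
  rw [h1, exoProb, endoProd, ← Finset.prod_mul_prod_compl K.exo]
  congr 1
  · refine Finset.prod_congr rfl fun i hi => ?_
    rw [if_neg (fun h => hX i h hi)]
  · exact Finset.prod_subtype _ (by simp) _

theorem exoProb_congr (K : CM ν Val) (hK : K.WF) (w a : Asg Val) (h : ∀ i ∈ K.exo, w i = a i) :
    K.exoProb w = K.exoProb a := by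
  refine Finset.prod_congr rfl fun i hi => ?_
  rw [h i hi]
  exact hK.cpt_pa i w a _ (by simp [hK.pa_exo i hi])

theorem joint_eq (K : CM ν Val) (w : Asg Val) : K.joint w = K.exoProb w * K.endoProd ∅ w := by
  have := K.prod_compl_eq ∅ (by simp) w
  simpa [joint] using this

theorem sum_pdo_eq (K : CM ν Val) (hK : K.WF) (X : Finset ν) (hX : ∀ i ∈ X, i ∉ K.exo)
    (xv : Asg Val) (Y : Finset ν) (yv : Asg Val) (a : Asg Val) :
    (∑ w : Asg Val, if (∀ i ∈ K.exo, w i = a i) ∧ ∀ i ∈ Y, w i = yv i then K.pdo X xv w else 0) =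
      K.exoProb a * K.core X xv Y yv a := by
  rw [core, Finset.mul_sum]
  refine Finset.sum_congr rfl fun w _ => ?_
  by_cases h1 : ∀ i ∈ K.exo, w i = a i
  · by_cases h2 : ∀ i ∈ Y, w i = yv i
    · by_cases h3 : ∀ i ∈ X, w i = xv i
      · rw [if_pos ⟨h1, h2⟩, if_pos ⟨h1, h2, h3⟩, pdo, if_pos h3, K.prod_compl_eq X hX,
          K.exoProb_congr hK w a h1]
      · rw [if_pos ⟨h1, h2⟩, if_neg (fun h => h3 h.2.2), pdo, if_neg h3, mul_zero]
    · rw [if_neg (fun h => h2 h.2), if_neg (fun h => h2 h.2.1), mul_zero]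
  · rw [if_neg (fun h => h1 h.1), if_neg (fun h => h1 h.1), mul_zero]

theorem core_empty (K : CM ν Val) (hK : K.WF) (X : Finset ν) (hX : ∀ i ∈ X, i ∉ K.exo)
    (xv yv a : Asg Val) : K.core X xv ∅ yv a = 1 := by
  rw [← K.sum_clamped hK _ (K.exo ∪ X) (fun i => if i ∈ X then xv i else a i) rfl, core]
  refine Finset.sum_congr rfl fun w _ => ?_
  have hiff : (∀ i ∈ K.exo ∪ X, w i = if i ∈ X then xv i else a i) ↔
      ((∀ i ∈ K.exo, w i = a i) ∧ (∀ i ∈ (∅ : Finset ν), w i = yv i) ∧ ∀ i ∈ X, w i = xv i) := by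
    constructor
    · intro h
      refine ⟨fun i hi => ?_, by simp, fun i hi => ?_⟩
      · have := h i (by simp [hi])
        rwa [if_neg (fun h => hX i h hi)] at this
      · have := h i (by simp [hi])
        rwa [if_pos hi] at this
    · rintro ⟨h1, -, h2⟩ i hi
      by_cases hiX : i ∈ X
      · rw [if_pos hiX, h2 i hiX]
      · rw [if_neg hiX, h1 i ((Finset.mem_union.mp hi).resolve_right hiX)]
  simp only [hiff]
  congr 1
  rw [endoProd, Finset.prod_ite]
  simp only [Finset.prod_const_one, one_mul]
  refine Finset.prod_bij (fun j _ => j.1) ?_ ?_ ?_ ?_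
  · intro j hj
    have := (Finset.mem_filter.mp hj).2
    simp [this, j.2]
  · intro j _ k _ h
    exact Subtype.ext h
  · intro i hi
    simp only [Finset.mem_compl, Finset.mem_union, not_or] at hi
    exact ⟨⟨i, hi.1⟩, by simp [hi.2], rfl⟩
  · intro j _
    rfl

theorem cfBasic_eq_core (K : CM ν Val) (hK : K.WF) (X : Finset ν) (hX : ∀ i ∈ X, i ∉ K.exo)
    (xv : Asg Val) (Y : Finset ν) (yv a : Asg Val) (ha : K.exoProb a ≠ 0) :
    K.cfBasic X xv Y yv a = K.core X xv Y yv a := by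
  have hden := K.sum_pdo_eq hK X hX xv ∅ yv a
  rw [K.core_empty hK X hX, mul_one] at hden
  simp only [Finset.notMem_empty, false_imp_iff, implies_true, and_true] at hden
  rw [cfBasic, K.sum_pdo_eq hK X hX, hden, mul_div_cancel_left₀ _ ha]

theorem refine_wf (M : CM ν Val) (hM : M.WF) (a : Asg Val) : (M.refine a).WF where
  pa_exo := hM.pa_exo
  acyclic := hM.acyclic
  cpt_pa := by
    intro i w w' x h
    have h' : ∀ j ∈ M.pa i, w j = w' j := h
    have hiff : (∀ j ∈ M.pa i, w j = a j) ↔ ∀ j ∈ M.pa i, w' j = a j :=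
      forall₂_congr fun j hj => by rw [h' j hj]
    simp only [refine, hiff, hM.cpt_pa i w w' x h']
  cpt_nonneg := by
    intro i w x
    simp only [refine]
    split_ifs
    · exact zero_le_one
    · exact le_rfl
    · exact hM.cpt_nonneg i w x
  cpt_sum := by
    intro i w
    simp only [refine]
    split_ifs
    · simp
    · exact hM.cpt_sum i w

/-! ### The PO-SCM with its potential outcomes held fixed -/

variable [∀ i, Nonempty (Val i)]

/-- The values of the parents of `i` in the world `w`. -/
def restrictPa (M : CM ν Val) (i : ν) (w : Asg Val) : M.PaAsg i := fun k => w k.1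

/-- The deterministic model over the original variables obtained from the PO-SCM by
holding the potential outcome variables at the values `φ`. -/
def detModel (M : CM ν Val) (φ : Asg (POB M)) : CM ν Val where
  exo := M.exo
  pa := M.pa
  ord := M.ord
  cpt := fun j w x =>
    if h : j ∈ M.exo then M.cpt j w x
    else if x = φ ⟨⟨j, h⟩, M.restrictPa j w⟩ then 1 else 0

/-- The probability that the potential outcome variables take the values `φ`. -/
def poProb (M : CM ν Val) (φ : Asg (POB M)) : ℝ :=
  ∏ p : POI M, M.cpt p.1.1 (M.extendPa p.1.1 p.2) (φ p)

theorem restrictPa_congr (M : CM ν Val) (i : ν) (w w' : Asg Val) :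
    M.restrictPa i w = M.restrictPa i w' ↔ ∀ j ∈ M.pa i, w j = w' j :=
  ⟨fun h j hj => congrFun h ⟨j, hj⟩, fun h => funext fun k => h k.1 k.2⟩

theorem cpt_extendPa (M : CM ν Val) (hM : M.WF) (i : ν) (w : Asg Val) (x : Val i) :
    M.cpt i (M.extendPa i (M.restrictPa i w)) x = M.cpt i w x :=
  hM.cpt_pa _ _ _ _ fun j hj => by simp [extendPa, hj, restrictPa]

theorem detModel_wf (M : CM ν Val) (hM : M.WF) (φ : Asg (POB M)) : (M.detModel φ).WF where
  pa_exo := hM.pa_exo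
  acyclic := hM.acyclic
  cpt_pa := by
    intro i w w' x h
    have h' : M.restrictPa i w = M.restrictPa i w' := (M.restrictPa_congr i w w').mpr h
    simp only [detModel]
    rw [h', hM.cpt_pa i w w' x h]
  cpt_nonneg := by
    intro i w x
    simp only [detModel]
    split_ifs
    · exact hM.cpt_nonneg i w x
    · exact zero_le_one
    · exact le_rfl
  cpt_sum := by
    intro i w
    simp only [detModel]
    split_ifs
    · exact hM.cpt_sum i w
    · exact (Finset.sum_ite_eq' univ _ _).trans (if_pos (Finset.mem_univ _))

/-- A world of the PO-SCM is a world of `M` together with values of the potential outcomes. -/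
def pairEquiv (M : CM ν Val) : Asg Val × Asg (POB M) ≃ Asg (SumVal Val (POB M)) where
  toFun q := fun i => match i with
    | .inl j => q.1 j
    | .inr p => q.2 p
  invFun w := (fun j => w (.inl j), fun p => w (.inr p))
  left_inv _ := rfl
  right_inv w := by
    funext i
    cases i <;> rfl

theorem sum_pair (M : CM ν Val) (f : Asg (SumVal Val (POB M)) → ℝ) :
    ∑ w, f w = ∑ a : Asg Val, ∑ φ : Asg (POB M), f (M.pairEquiv (a, φ)) := by
  rw [← Fintype.sum_prod_type' (f := fun a φ => f (M.pairEquiv (a, φ)))]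
  exact (Equiv.sum_comp M.pairEquiv f).symm

theorem MN_joint (M : CM ν Val) (a : Asg Val) (φ : Asg (POB M)) :
    M.MN.joint (M.pairEquiv (a, φ)) = (M.detModel φ).joint a * M.poProb φ := by
  rw [joint, Fintype.prod_sum_type]
  rfl

theorem forall_image_lift (M : CM ν Val) {_ : DecidableEq (ν ⊕ POI M)} (Z : Finset ν) (zv a : Asg Val) (φ : Asg (POB M)) :
    (∀ i ∈ Z.image (Sum.inl : ν → ν ⊕ POI M),
      M.pairEquiv (a, φ) i = (liftAsg zv : Asg (SumVal Val (POB M))) i) ↔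
      ∀ i ∈ Z, a i = zv i := by
  rw [Finset.forall_mem_image]
  rfl

theorem MN_pdo (M : CM ν Val) (X : Finset ν) (xv a : Asg Val) (φ : Asg (POB M)) :
    M.MN.pdo (X.image Sum.inl) (liftAsg xv) (M.pairEquiv (a, φ)) =
      (M.detModel φ).pdo X xv a * M.poProb φ := by
  rw [pdo, pdo]
  simp only [forall_image_lift]
  by_cases h : ∀ i ∈ X, a i = xv i
  · rw [if_pos h, if_pos h]
    have hc : (X.image (Sum.inl : ν → ν ⊕ POI M))ᶜ = Xᶜ.disjSum univ := by
      ext i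
      cases i <;> simp
    rw [hc, Finset.prod_disjSum]
    rfl
  · rw [if_neg h, if_neg h, zero_mul]

theorem forall_MN_exo (M : CM ν Val) (a b : Asg Val) (φ ψ : Asg (POB M)) :
    (∀ i ∈ M.MN.exo, M.pairEquiv (b, ψ) i = M.pairEquiv (a, φ) i) ↔
      (∀ i ∈ M.exo, b i = a i) ∧ ψ = φ := by
  constructor
  · intro h
    exact ⟨fun i hi => h (Sum.inl i) (by simp [MN, hi]),
      funext fun p => h (Sum.inr p) (by simp [MN])⟩
  · rintro ⟨h, rfl⟩ i hi
    cases i with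
    | inl j => exact h j (by simpa [MN] using hi)
    | inr p => rfl

theorem MN_sum (M : CM ν Val) (X : Finset ν) (xv : Asg Val) (P : Asg Val → Prop)
    (P' : Asg (SumVal Val (POB M)) → Prop) (hP : ∀ b ψ, P' (M.pairEquiv (b, ψ)) ↔ P b)
    (a : Asg Val) (φ : Asg (POB M)) :
    (∑ w : Asg (SumVal Val (POB M)),
      if (∀ i ∈ M.MN.exo, w i = M.pairEquiv (a, φ) i) ∧ P' w then
        M.MN.pdo (X.image Sum.inl) (liftAsg xv) w else 0) =
    (∑ b : Asg Val, if (∀ i ∈ M.exo, b i = a i) ∧ P b then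
        (M.detModel φ).pdo X xv b else 0) * M.poProb φ := by
  rw [sum_pair, Finset.sum_mul]
  refine Finset.sum_congr rfl fun b _ => ?_
  rw [Finset.sum_eq_single φ]
  · simp only [forall_MN_exo, hP, MN_pdo, and_true, ite_mul, zero_mul]
  · intro ψ _ hψ
    rw [if_neg]
    rw [forall_MN_exo]
    exact fun h => hψ h.1.2
  · simp

theorem MN_cfBasic (M : CM ν Val) (X : Finset ν) (xv : Asg Val) (Y : Finset ν) (yv a : Asg Val)
    (φ : Asg (POB M)) (hφ : M.poProb φ ≠ 0) :
    M.MN.cfBasic (X.image Sum.inl) (liftAsg xv) (Y.image Sum.inl) (liftAsg yv)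
      (M.pairEquiv (a, φ)) = (M.detModel φ).cfBasic X xv Y yv a := by
  have h1 := M.MN_sum X xv (fun b => ∀ i ∈ Y, b i = yv i)
    (fun w => ∀ i ∈ Y.image (Sum.inl : ν → ν ⊕ POI M),
      w i = (liftAsg yv : Asg (SumVal Val (POB M))) i)
    (fun b ψ => M.forall_image_lift Y yv b ψ) a φ
  have h2 := M.MN_sum X xv (fun _ => True) (fun _ => True) (fun _ _ => Iff.rfl) a φ
  simp only [and_true] at h2
  rw [cfBasic, cfBasic]
  refine Eq.trans ?_ (mul_div_mul_right _ _ hφ)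
  have hexo : M.exo = (M.detModel φ).exo := rfl
  rw [hexo] at h1
  congr 1
  convert h1

/-! ### Averaging over the potential outcomes -/

theorem prod_POI (M : CM ν Val) (f : POI M → ℝ) :
    ∏ p : POI M, f p = ∏ j : {i : ν // i ∉ M.exo}, ∏ κ : M.PaAsg j.1, f ⟨j, κ⟩ := by
  refine Eq.trans ?_ (Fintype.prod_sigma (α := fun i : {i : ν // i ∉ M.exo} => M.PaAsg i.1) f)
  exact Fintype.prod_equiv (Equiv.refl _) _ _ fun _ => rfl

theorem sum_POB (M : CM ν Val) (p : POI M) (f : Val p.1.1 → ℝ) :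
    (∑ x : POB M p, f x) = ∑ x : Val p.1.1, f x :=
  Fintype.sum_equiv (Equiv.refl _) _ _ fun _ => rfl

/-- The factor of a single endogenous variable. Potential outcomes at different parent values are
independent, and one is queried at the parent values of `a`, another at those of `w`; the two
queries hit the same variable exactly when the refinement at `a` applies in `w`. -/
theorem prod_paAsg (M : CM ν Val) (hM : M.WF) (X : Finset ν) (a w : Asg Val)
    (j : {i : ν // i ∉ M.exo}) :
    (∏ κ : M.PaAsg j.1, ∑ x : Val j.1, M.cpt j.1 (M.extendPa j.1 κ) x *
      ((if κ = M.restrictPa j.1 a then (if a j.1 = x then 1 else 0) else 1) *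
       (if κ = M.restrictPa j.1 w then
          (if j.1 ∈ X then 1 else if w j.1 = x then 1 else 0) else 1))) =
    M.cpt j.1 a (a j.1) * (if j.1 ∈ X then 1 else (M.refine a).cpt j.1 w (w j.1)) := by
  have hterm : ∀ κ : M.PaAsg j.1, (∑ x : Val j.1, M.cpt j.1 (M.extendPa j.1 κ) x *
      ((if κ = M.restrictPa j.1 a then (if a j.1 = x then 1 else 0) else 1) *
       (if κ = M.restrictPa j.1 w then
          (if j.1 ∈ X then 1 else if w j.1 = x then 1 else 0) else 1))) =
      (if κ = M.restrictPa j.1 a then M.cpt j.1 a (a j.1) else 1) *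
      (if κ = M.restrictPa j.1 w then
        (if j.1 ∈ X then 1 else (M.refine a).cpt j.1 w (w j.1)) else 1) := by
    intro κ
    by_cases ha : κ = M.restrictPa j.1 a
    · by_cases hw : κ = M.restrictPa j.1 w
      · have hwa : ∀ k ∈ M.pa j.1, w k = a k :=
          (M.restrictPa_congr j.1 w a).mp (hw.symm.trans ha)
        have hr : (M.refine a).cpt j.1 w (w j.1) = if w j.1 = a j.1 then 1 else 0 := by
          simp only [refine]
          rw [if_pos ⟨j.2, hwa⟩]
        simp only [if_pos ha, if_pos hw, hr]
        rw [Finset.sum_eq_single (a j.1)]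
        · rw [ha, M.cpt_extendPa hM, if_pos rfl, one_mul]
        · intro x _ hx
          rw [if_neg (Ne.symm hx), zero_mul, mul_zero]
        · simp
      · simp only [if_pos ha, if_neg hw, mul_one]
        simp only [mul_ite, mul_one, mul_zero, Finset.sum_ite_eq, Finset.mem_univ, if_true]
        rw [ha, M.cpt_extendPa hM]
    · by_cases hw : κ = M.restrictPa j.1 w
      · have hwa : ¬ ∀ k ∈ M.pa j.1, w k = a k := fun h =>
          ha (hw.trans ((M.restrictPa_congr j.1 w a).mpr h))
        have hr : (M.refine a).cpt j.1 w (w j.1) = M.cpt j.1 w (w j.1) := by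
          simp only [refine]
          rw [if_neg (fun h => hwa h.2)]
        simp only [if_neg ha, if_pos hw, hr, one_mul]
        by_cases hX : j.1 ∈ X
        · simp only [if_pos hX, mul_one]
          exact hM.cpt_sum _ _
        · simp only [if_neg hX, mul_ite, mul_one, mul_zero, Finset.sum_ite_eq, Finset.mem_univ,
            if_true]
          rw [hw, M.cpt_extendPa hM]
      · simp only [if_neg ha, if_neg hw, mul_one]
        exact hM.cpt_sum _ _
  rw [Finset.prod_congr rfl fun κ _ => hterm κ, Finset.prod_mul_distrib,
    Finset.prod_ite_eq', Finset.prod_ite_eq']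
  simp

/-- Averaging over the potential outcomes the event that both `a` (without intervention) and `w`
(under an intervention on `X`) solve the structural equations yields the table product of `M` at
`a` times that of the refinement at `a` under the intervention. -/
theorem sum_poProb (M : CM ν Val) (hM : M.WF) (X : Finset ν) (a w : Asg Val) :
    (∑ φ : Asg (POB M), M.poProb φ *
      ((M.detModel φ).endoProd ∅ a * (M.detModel φ).endoProd X w)) =
    M.endoProd ∅ a * (M.refine a).endoProd X w := by
  have hdet : ∀ (φ : Asg (POB M)) (S : Finset ν) (v : Asg Val), (M.detModel φ).endoProd S v =
      ∏ p : POI M, if p.2 = M.restrictPa p.1.1 v then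
        (if p.1.1 ∈ S then 1 else if v p.1.1 = φ p then 1 else 0) else 1 := by
    intro φ S v
    rw [prod_POI]
    refine Finset.prod_congr rfl fun j _ => ?_
    refine Eq.trans ?_ (Finset.prod_ite_eq' univ (M.restrictPa j.1 v)
      (fun κ => if j.1 ∈ S then (1 : ℝ) else if v j.1 = φ ⟨j, κ⟩ then 1 else 0)).symm
    rw [if_pos (Finset.mem_univ _)]
    congr 1
    exact dif_neg j.2
  have hR : M.endoProd ∅ a * (M.refine a).endoProd X w = ∏ j : {i : ν // i ∉ M.exo},
      (M.cpt j.1 a (a j.1) * (if j.1 ∈ X then 1 else (M.refine a).cpt j.1 w (w j.1))) := by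
    rw [Finset.prod_mul_distrib]
    simp only [endoProd, Finset.notMem_empty, if_false]
    rfl
  rw [hR, Finset.prod_congr rfl fun j _ => (M.prod_paAsg hM X a w j).symm]
  simp only [hdet, poProb, ← Finset.prod_mul_distrib]
  rw [← M.prod_POI (fun p => ∑ x : Val p.1.1, M.cpt p.1.1 (M.extendPa p.1.1 p.2) x *
      ((if p.2 = M.restrictPa p.1.1 a then (if a p.1.1 = x then 1 else 0) else 1) *
       (if p.2 = M.restrictPa p.1.1 w then
          (if p.1.1 ∈ X then 1 else if w p.1.1 = x then 1 else 0) else 1)))]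
  simp only [← sum_POB]
  rw [Fintype.prod_sum]
  simp only [Finset.notMem_empty, if_false]

theorem detModel_exoProb (M : CM ν Val) (φ : Asg (POB M)) (a : Asg Val) :
    (M.detModel φ).exoProb a = M.exoProb a :=
  Finset.prod_congr rfl fun _ hi => dif_pos hi

theorem refine_exoProb (M : CM ν Val) (b a : Asg Val) :
    (M.refine b).exoProb a = M.exoProb a :=
  Finset.prod_congr rfl fun _ hi => if_neg fun h => h.1 hi

/-- The PO-SCM has `M` as its marginal on the original variables. -/
theorem sum_MN_joint (M : CM ν Val) (hM : M.WF) (a : Asg Val) :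
    ∑ φ : Asg (POB M), M.MN.joint (M.pairEquiv (a, φ)) = M.joint a := by
  -- An intervention on every variable makes the second factor of `sum_poProb` trivial.
  have h := M.sum_poProb hM univ a a
  have h1 : ∀ K : CM ν Val, K.endoProd univ a = 1 := fun K => by simp [endoProd]
  simp only [h1, mul_one] at h
  rw [joint_eq, ← h, Finset.mul_sum]
  refine Finset.sum_congr rfl fun φ _ => ?_
  rw [MN_joint, joint_eq, detModel_exoProb]
  ring

/-- Given a full world `a` of the original variables, the two semantics agree. -/
theorem sum_MN_cfBasic (M : CM ν Val) (hM : M.WF) (X : Finset ν) (hX : ∀ i ∈ X, i ∉ M.exo)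
    (xv : Asg Val) (Y : Finset ν) (yv a : Asg Val) :
    (∑ φ : Asg (POB M),
      M.MN.cfBasic (X.image Sum.inl) (liftAsg xv) (Y.image Sum.inl) (liftAsg yv)
        (M.pairEquiv (a, φ)) * M.MN.joint (M.pairEquiv (a, φ))) =
    M.pbBasic a X xv Y yv * M.joint a := by
  by_cases ha : M.exoProb a = 0
  · simp [MN_joint, joint_eq (M.detModel _), joint_eq M, detModel_exoProb, ha]
  have hterm : ∀ φ : Asg (POB M),
      M.MN.cfBasic (X.image Sum.inl) (liftAsg xv) (Y.image Sum.inl) (liftAsg yv)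
        (M.pairEquiv (a, φ)) * M.MN.joint (M.pairEquiv (a, φ)) =
      (M.detModel φ).core X xv Y yv a * (M.exoProb a * (M.detModel φ).endoProd ∅ a *
        M.poProb φ) := by
    intro φ
    rw [MN_joint, joint_eq, detModel_exoProb]
    by_cases hφ : M.poProb φ = 0
    · simp [hφ]
    · rw [M.MN_cfBasic _ _ _ _ _ _ hφ, (M.detModel φ).cfBasic_eq_core (M.detModel_wf hM φ) X hX]
      rwa [detModel_exoProb]
  rw [Finset.sum_congr rfl fun φ _ => hterm φ, pbBasic,
    (M.refine a).cfBasic_eq_core (M.refine_wf hM a) X hX _ _ _ _ (by rwa [refine_exoProb]),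
    joint_eq]
  simp only [core, Finset.sum_mul]
  rw [Finset.sum_comm]
  refine Finset.sum_congr rfl fun w _ => ?_
  change (∑ φ : Asg (POB M), (if (∀ i ∈ M.exo, w i = a i) ∧ (∀ i ∈ Y, w i = yv i) ∧
      ∀ i ∈ X, w i = xv i then (M.detModel φ).endoProd X w else 0) * _) =
    (if (∀ i ∈ M.exo, w i = a i) ∧ (∀ i ∈ Y, w i = yv i) ∧
      ∀ i ∈ X, w i = xv i then (M.refine a).endoProd X w else 0) * _
  split_ifs
  · have h := M.sum_poProb hM X a w
    calc _ = M.exoProb a * ∑ φ : Asg (POB M), M.poProb φ *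
          ((M.detModel φ).endoProd ∅ a * (M.detModel φ).endoProd X w) := by
            rw [Finset.mul_sum]
            exact Finset.sum_congr rfl fun φ _ => by ring
      _ = _ := by rw [h]; ring
  · simp

end Helpers

end CM

/-- **Proposition 2.** Given a causal model `M`, for all `Y, X, Z ⊆ V`, `y ∈ R(Y)`,
`x ∈ R(X)`, `z ∈ R(Z)` with `P_M(z) > 0`: the conditional B-probability of the basic
counterfactual equals the conditional probability computed in the PO-SCM:
`P^B(y_x | z) = P^N(y_x | z)`. -/
theorem pbCond_eq_pnCond
    {ν : Type} {Val : ν → Type} [Fintype ν] [∀ i, Fintype (Val i)] [∀ i, Nonempty (Val i)]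
    (M : CM ν Val) (hM : M.WF)
    (X : Finset ν) (hX : ∀ i ∈ X, i ∉ M.exo) (xv : Asg Val)
    (Y : Finset ν) (hY : ∀ i ∈ Y, i ∉ M.exo) (yv : Asg Val)
    (Z : Finset ν) (hZ : ∀ i ∈ Z, i ∉ M.exo) (zv : Asg Val)
    (hz : 0 < ∑ w : Asg Val, if ∀ i ∈ Z, w i = zv i then M.joint w else 0) :
    M.pbProbCond [⟨X, xv, Y, yv⟩] Z zv = M.pnProbCond [⟨X, xv, Y, yv⟩] Z zv := by
  rw [CM.pbProbCond, CM.pnProbCond, extProbCond, CM.cfProbCond, CM.sum_pair, CM.sum_pair]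
  simp only [List.map_cons, List.map_nil, List.prod_cons, List.prod_nil, mul_one, liftCFEvent]
  congr 1
  · refine Finset.sum_congr rfl fun a _ => ?_
    simp only [CM.forall_image_lift]
    by_cases h : ∀ i ∈ Z, a i = zv i
    · simp only [if_pos h]
      convert (M.sum_MN_cfBasic hM X hX xv Y yv a).symm
    · simp only [if_neg h, zero_mul, Finset.sum_const_zero]
  · refine Finset.sum_congr rfl fun a _ => ?_
    simp only [CM.forall_image_lift]
    by_cases h : ∀ i ∈ Z, a i = zv i
    · simp only [if_pos h]
      exact (M.sum_MN_joint hM a).symm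
    · simp only [if_neg h, Finset.sum_const_zero]

end
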